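/- Let m ∈ ℂ ∖ ℤ with Re(m) > −1 and k ∈ ℂ with Re(k) > 0. Define the Bessel resolvent kernel G(x,y) := (1/k)·𝓘_m(k·min(x,y))·𝓚_m(k·max(x,y)) for x, y > 0. Then for every continuous f : ]0,∞[ → ℂ with compact support in ]0,∞[, the function u(x) := ∫_0^∞ G(x,y) f(y) dy is twice continuously differentiable on ]0,∞[ and satisfies −u''(x) + (m² − 1/4)·x^{−2}·u(x) + k²·u(x) = f(x) for all x > 0. -/

import Mathlib

open Complex Set MeasureTheory

/-- Olver-normalized hypergeometric function `₀𝐅₁(c; w) = ∑ wⁿ/(n! Γ(c+n))`. -/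
noncomputable def zeroF1reg (c w : ℂ) : ℂ :=
  ∑' n : ℕ, w ^ n / ((n.factorial : ℂ) * Complex.Gamma (c + n))

/-- Hyperbolic 1d Bessel function `𝓘_m(z) = √π (z/2)^{1/2+m} ₀𝐅₁(m+1; z²/4)`
(principal branch powers). -/
noncomputable def besselI1d (m z : ℂ) : ℂ :=
  (Real.sqrt Real.pi : ℂ) * (z / 2) ^ ((1 : ℂ) / 2 + m) * zeroF1reg (m + 1) (z ^ 2 / 4)

/-- 1d Macdonald function `𝓚_m(z) = (𝓘_{-m}(z) - 𝓘_m(z))/sin(π m)` for `m ∉ ℤ`. -/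
noncomputable def macdonaldK1d (m z : ℂ) : ℂ :=
  (besselI1d (-m) z - besselI1d m z) / Complex.sin (Real.pi * m)

lemma rGamma_bdd (c : ℂ) : ∃ C : ℝ, 0 ≤ C ∧ ∀ n : ℕ, ‖(Complex.Gamma (c + n))⁻¹‖ ≤ C := by
  obtain ⟨N, hN⟩ := exists_nat_ge (‖c‖ + 1)
  have hstep : ∀ n : ℕ, N ≤ n → ‖(Complex.Gamma (c + n))⁻¹‖ ≤ ‖(Complex.Gamma (c + N))⁻¹‖ := by
    intro n hn
    induction n, hn using Nat.le_induction with
    | base => exact le_rfl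
    | succ n hn ih =>
      have h := Complex.one_div_Gamma_eq_self_mul_one_div_Gamma_add_one (c + n)
      rw [h, norm_mul] at ih
      have h1 : (1 : ℝ) ≤ ‖c + n‖ := by
        have h2 : ‖(n : ℂ)‖ ≤ ‖c + n‖ + ‖c‖ := by
          have := norm_sub_le (c + n) c
          simpa using this
        have h3 : (N : ℝ) ≤ n := by exact_mod_cast hn
        rw [Complex.norm_natCast] at h2
        linarith
      have h4 : c + ((n + 1 : ℕ) : ℂ) = c + n + 1 := by push_cast; ring
      rw [h4]
      refine le_trans ?_ ih
      exact le_mul_of_one_le_left (norm_nonneg _) h1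
  refine ⟨∑ n ∈ Finset.range (N + 1), ‖(Complex.Gamma (c + n))⁻¹‖,
    Finset.sum_nonneg fun _ _ => norm_nonneg _, fun n => ?_⟩
  have key : ∀ j : ℕ, j < N + 1 → ‖(Complex.Gamma (c + j))⁻¹‖ ≤
      ∑ n ∈ Finset.range (N + 1), ‖(Complex.Gamma (c + n))⁻¹‖ := fun j hj =>
    Finset.single_le_sum (f := fun n : ℕ => ‖(Complex.Gamma (c + n))⁻¹‖)
      (fun _ _ => norm_nonneg _) (Finset.mem_range.2 hj)
  rcases le_or_gt N n with h | h
  · exact (hstep n h).trans (key N (by omega))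
  · exact key n (by omega)

lemma F_summable (c w : ℂ) :
    Summable fun n : ℕ => w ^ n / ((n.factorial : ℂ) * Complex.Gamma (c + n)) := by
  obtain ⟨C, hC, h⟩ := rGamma_bdd c
  refine Summable.of_norm_bounded ((Real.summable_pow_div_factorial ‖w‖).mul_right C) fun n => ?_
  have : w ^ n / ((n.factorial : ℂ) * Complex.Gamma (c + n)) =
    w ^ n / (n.factorial : ℂ) * (Complex.Gamma (c + n))⁻¹ := by
    rw [div_mul_eq_div_div]; rfl
  rw [this, norm_mul, norm_div, norm_pow, Complex.norm_natCast]
  exact mul_le_mul_of_nonneg_left (h n) (by positivity)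

lemma F_succ_term (c w : ℂ) (n : ℕ) :
    ((n + 1 : ℕ) : ℂ) * w ^ n / (((n + 1).factorial : ℂ) * Complex.Gamma (c + (n + 1 : ℕ))) =
    w ^ n / ((n.factorial : ℂ) * Complex.Gamma (c + 1 + n)) := by
  have h1 : c + ((n + 1 : ℕ) : ℂ) = c + 1 + n := by push_cast; ring
  have h2 : ((n + 1 : ℕ) : ℂ) ≠ 0 := by exact_mod_cast n.succ_ne_zero
  rw [h1, Nat.factorial_succ, Nat.cast_mul, mul_assoc, mul_div_mul_left _ _ h2]

lemma F_hasDerivAt (c w : ℂ) : HasDerivAt (zeroF1reg c) (zeroF1reg (c + 1) w) w := by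
  obtain ⟨C, hC, h⟩ := rGamma_bdd c
  have hs : Summable fun n : ℕ => (n : ℝ) * (‖w‖ + 1) ^ (n - 1) / (n.factorial : ℝ) * C := by
    apply Summable.mul_right
    rw [← summable_nat_add_iff 1]
    refine (Real.summable_pow_div_factorial (‖w‖ + 1)).congr fun n => ?_
    have h2 : ((n + 1 : ℕ) : ℝ) ≠ 0 := by exact_mod_cast n.succ_ne_zero
    rw [Nat.factorial_succ, Nat.cast_mul, Nat.add_sub_cancel, mul_div_mul_left _ _ h2]
  have key := hasDerivAt_tsum_of_isPreconnected (𝕜 := ℂ) (F := ℂ)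
    (g := fun (n : ℕ) w => w ^ n / ((n.factorial : ℂ) * Complex.Gamma (c + n)))
    (g' := fun (n : ℕ) w => (n : ℂ) * w ^ (n - 1) / ((n.factorial : ℂ) * Complex.Gamma (c + n)))
    (t := Metric.ball 0 (‖w‖ + 1)) (y₀ := w) (y := w) hs Metric.isOpen_ball
    (convex_ball _ _).isPreconnected
    (fun n y _ => (hasDerivAt_pow n y).div_const _)
    (fun n y hy => by
      have : (n : ℂ) * y ^ (n - 1) / ((n.factorial : ℂ) * Complex.Gamma (c + n)) =
        (n : ℂ) * y ^ (n - 1) / (n.factorial : ℂ) * (Complex.Gamma (c + n))⁻¹ := by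
        rw [div_mul_eq_div_div]; rfl
      rw [mem_ball_zero_iff] at hy
      rw [this, norm_mul, norm_div, norm_mul, norm_pow, Complex.norm_natCast,
        Complex.norm_natCast]
      gcongr
      exact h n)
    (by simp) (F_summable c w) (by simp)
  have e : ∑' n : ℕ, (n : ℂ) * w ^ (n - 1) / ((n.factorial : ℂ) * Complex.Gamma (c + n)) =
      zeroF1reg (c + 1) w := by
    have hs' : Summable fun n : ℕ =>
        (n : ℂ) * w ^ (n - 1) / ((n.factorial : ℂ) * Complex.Gamma (c + n)) := by
      rw [← summable_nat_add_iff 1]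
      exact (F_summable (c + 1) w).congr fun n => (F_succ_term c w n).symm
    rw [hs'.tsum_eq_zero_add]
    simp only [Nat.cast_zero, zero_mul, zero_div, zero_add, Nat.add_sub_cancel]
    exact tsum_congr fun n => F_succ_term c w n
  rw [← e]
  exact key

lemma F_contig (c w : ℂ) :
    zeroF1reg c w = c * zeroF1reg (c + 1) w + w * zeroF1reg (c + 2) w := by
  have h2 : w * zeroF1reg (c + 2) w =
      ∑' n : ℕ, (n : ℂ) * (w ^ n / ((n.factorial : ℂ) * Complex.Gamma (c + 1 + n))) := by
    have e : ∀ n : ℕ, ((n + 1 : ℕ) : ℂ) *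
        (w ^ (n + 1) / (((n + 1).factorial : ℂ) * Complex.Gamma (c + 1 + (n + 1 : ℕ)))) =
        w * (w ^ n / ((n.factorial : ℂ) * Complex.Gamma (c + 2 + n))) := by
      intro n
      have := F_succ_term (c + 1) w n
      rw [show c + 1 + 1 = c + 2 by ring] at this
      rw [← this]; ring
    have hs' : Summable fun n : ℕ =>
        (n : ℂ) * (w ^ n / ((n.factorial : ℂ) * Complex.Gamma (c + 1 + n))) := by
      rw [← summable_nat_add_iff 1]
      exact ((F_summable (c + 2) w).mul_left w).congr fun n => (e n).symm
    rw [hs'.tsum_eq_zero_add]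
    simp only [Nat.cast_zero, zero_mul, zero_add]
    rw [tsum_congr e, tsum_mul_left]; rfl
  have hs2 : Summable fun n : ℕ =>
      (n : ℂ) * (w ^ n / ((n.factorial : ℂ) * Complex.Gamma (c + 1 + n))) := by
    refine ((F_summable c w).sub ((F_summable (c + 1) w).mul_left c)).congr fun n => ?_
    have h := Complex.one_div_Gamma_eq_self_mul_one_div_Gamma_add_one (c + n)
    rw [show c + n + 1 = c + 1 + n by ring] at h
    simp only [div_eq_mul_inv, mul_inv, h]; ring
  rw [h2]
  unfold zeroF1reg
  rw [← tsum_mul_left, ← ((F_summable (c + 1) w).mul_left c).tsum_add hs2]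
  refine tsum_congr fun n => ?_
  have h := Complex.one_div_Gamma_eq_self_mul_one_div_Gamma_add_one (c + n)
  rw [show c + n + 1 = c + 1 + n by ring] at h
  simp only [div_eq_mul_inv, mul_inv, h]; ring

lemma F_zero (c : ℂ) : zeroF1reg c 0 = (Complex.Gamma c)⁻¹ := by
  unfold zeroF1reg
  rw [tsum_eq_single 0 (fun n hn => by simp [hn])]
  simp

lemma F_wronsk (m w : ℂ) :
    -2 * m * (zeroF1reg (m + 1) w * zeroF1reg (-m + 1) w) +
      2 * w * (zeroF1reg (m + 1) w * zeroF1reg (-m + 2) w -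
        zeroF1reg (m + 2) w * zeroF1reg (-m + 1) w) =
    -2 * m * ((Complex.Gamma (m + 1))⁻¹ * (Complex.Gamma (-m + 1))⁻¹) := by
  let P : ℂ → ℂ := fun w => -2 * m * (zeroF1reg (m + 1) w * zeroF1reg (-m + 1) w) +
      2 * w * (zeroF1reg (m + 1) w * zeroF1reg (-m + 2) w -
        zeroF1reg (m + 2) w * zeroF1reg (-m + 1) w)
  have hP : ∀ w, HasDerivAt P 0 w := by
    intro w
    have d1 := F_hasDerivAt (m + 1) w
    have d2 := F_hasDerivAt (m + 2) w
    have d3 := F_hasDerivAt (-m + 1) w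
    have d4 := F_hasDerivAt (-m + 2) w
    have c1 := F_contig (m + 1) w
    have c2 := F_contig (-m + 1) w
    rw [show m + 1 + 1 = m + 2 by ring, show m + 1 + 2 = m + 3 by ring] at c1
    rw [show -m + 1 + 1 = -m + 2 by ring, show -m + 1 + 2 = -m + 3 by ring] at c2
    rw [show m + 1 + 1 = m + 2 by ring] at d1
    rw [show m + 2 + 1 = m + 3 by ring] at d2
    rw [show -m + 1 + 1 = -m + 2 by ring] at d3
    rw [show -m + 2 + 1 = -m + 3 by ring] at d4
    have := ((d1.mul d3).const_mul (-2 * m)).add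
      (((hasDerivAt_id w).const_mul 2).mul ((d1.mul d4).sub (d2.mul d3)))
    refine this.congr_deriv ?_
    simp only [id, Pi.mul_apply, Pi.sub_apply]
    linear_combination 2 * zeroF1reg (-m + 1) w * c1 - 2 * zeroF1reg (m + 1) w * c2
  have := is_const_of_deriv_eq_zero (fun w => (hP w).differentiableAt) (fun w => (hP w).deriv) w 0
  simp only [P] at this
  rw [this]
  simp [F_zero]

noncomputable def besselD (m z : ℂ) : ℂ :=
  (Real.sqrt Real.pi : ℂ) * (z / 2) ^ ((1 : ℂ) / 2 + m) *
    ((1 / 2 + m) / z * zeroF1reg (m + 1) (z ^ 2 / 4) + z / 2 * zeroF1reg (m + 2) (z ^ 2 / 4))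

lemma pow_hasDerivAt (s z : ℂ) (hz : 0 < z.re) :
    HasDerivAt (fun z : ℂ => (z / 2) ^ s) ((z / 2) ^ s * (s / z)) z := by
  have hz0 : z ≠ 0 := by rintro rfl; simp at hz
  have hs : z / 2 ∈ Complex.slitPlane := by
    left; simpa using hz
  have := ((hasDerivAt_id z).div_const 2).cpow_const (c := s) hs
  refine this.congr_deriv ?_
  simp only [id]
  rw [Complex.cpow_sub _ _ (by simpa using hz0), Complex.cpow_one]
  field_simp

lemma F_sq_hasDerivAt (c z : ℂ) :
    HasDerivAt (fun z : ℂ => zeroF1reg c (z ^ 2 / 4)) (z / 2 * zeroF1reg (c + 1) (z ^ 2 / 4)) z := by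
  have := (F_hasDerivAt c (z ^ 2 / 4)).comp z ((hasDerivAt_pow 2 z).div_const 4)
  refine this.congr_deriv ?_
  push_cast; ring

lemma bessel_hasDerivAt (m z : ℂ) (hz : 0 < z.re) :
    HasDerivAt (besselI1d m) (besselD m z) z := by
  have := ((pow_hasDerivAt (1 / 2 + m) z hz).const_mul (Real.sqrt Real.pi : ℂ)).mul
    (F_sq_hasDerivAt (m + 1) z)
  refine this.congr_deriv ?_
  rw [show m + 1 + 1 = m + 2 by ring]
  unfold besselD; ring

lemma besselD_hasDerivAt (m z : ℂ) (hz : 0 < z.re) :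
    HasDerivAt (besselD m) (((m ^ 2 - 1 / 4) / z ^ 2 + 1) * besselI1d m z) z := by
  have hz0 : z ≠ 0 := by rintro rfl; simp at hz
  have := ((pow_hasDerivAt (1 / 2 + m) z hz).const_mul (Real.sqrt Real.pi : ℂ)).mul
    ((((hasDerivAt_inv hz0).const_mul (1 / 2 + m)).mul (F_sq_hasDerivAt (m + 1) z)).add
     (((hasDerivAt_id z).div_const 2).mul (F_sq_hasDerivAt (m + 2) z)))
  have c1 := F_contig (m + 1) (z ^ 2 / 4)
  rw [show m + 1 + 1 = m + 2 by ring, show m + 1 + 2 = m + 3 by ring] at c1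
  rw [show m + 1 + 1 = m + 2 by ring, show m + 2 + 1 = m + 3 by ring] at this
  refine this.congr_deriv ?_
  unfold besselI1d
  simp only [id, Pi.mul_apply, Pi.add_apply]
  set E := (z / 2) ^ ((1 : ℂ) / 2 + m)
  generalize zeroF1reg (m + 1) (z ^ 2 / 4) = F1 at *
  generalize zeroF1reg (m + 2) (z ^ 2 / 4) = F2 at *
  generalize zeroF1reg (m + 3) (z ^ 2 / 4) = F3 at *
  field_simp
  linear_combination (-16 * E * z ^ 2) * c1

lemma bessel_wronsk (m z : ℂ) (hm : ∀ n : ℤ, m ≠ (n : ℂ)) (hz : 0 < z.re) :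
    besselI1d m z * besselD (-m) z - besselD m z * besselI1d (-m) z =
      - Complex.sin (Real.pi * m) := by
  have hz0 : z ≠ 0 := by rintro rfl; simp at hz
  have h := F_wronsk m (z ^ 2 / 4)
  have hm0 : m ≠ 0 := by simpa using hm 0
  have hpi : (Real.pi : ℂ) ≠ 0 := by exact_mod_cast Real.pi_ne_zero
  have hg : (Complex.Gamma (m + 1))⁻¹ * (Complex.Gamma (-m + 1))⁻¹ =
      Complex.sin (Real.pi * m) / (Real.pi * m) := by
    have := Complex.Gamma_mul_Gamma_one_sub m
    rw [Complex.Gamma_add_one m hm0, ← mul_inv, mul_assoc, show -m + 1 = 1 - m by ring, this]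
    rw [mul_inv, inv_div]; field_simp
  rw [hg] at h
  have hp : (z / 2) ^ ((1 : ℂ) / 2 + m) * (z / 2) ^ ((1 : ℂ) / 2 + -m) = z / 2 := by
    rw [← Complex.cpow_add _ _ (by simpa using hz0)]
    rw [show (1 : ℂ) / 2 + m + (1 / 2 + -m) = 1 by ring, Complex.cpow_one]
  have hq : (Real.sqrt Real.pi : ℂ) * (Real.sqrt Real.pi : ℂ) = Real.pi := by
    rw [← Complex.ofReal_mul, Real.mul_self_sqrt Real.pi_pos.le]
  unfold besselI1d besselD
  generalize zeroF1reg (m + 1) (z ^ 2 / 4) = F1 at *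
  generalize zeroF1reg (m + 2) (z ^ 2 / 4) = F2 at *
  generalize zeroF1reg (-m + 1) (z ^ 2 / 4) = F3 at *
  generalize zeroF1reg (-m + 2) (z ^ 2 / 4) = F4 at *
  generalize (z / 2) ^ ((1 : ℂ) / 2 + m) = E1 at *
  generalize (z / 2) ^ ((1 : ℂ) / 2 + -m) = E2 at *
  generalize (Real.sqrt Real.pi : ℂ) = p at *
  generalize Complex.sin (Real.pi * m) = S at *
  calc _ = (p * p) * (E1 * E2) * (F1 * ((1 / 2 + -m) / z * F3 + z / 2 * F4) -
        ((1 / 2 + m) / z * F1 + z / 2 * F2) * F3) := by ring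
    _ = (Real.pi : ℂ) / 2 * (-2 * m * (F1 * F3) + 2 * (z ^ 2 / 4) * (F1 * F4 - F2 * F3)) := by
        rw [hp, hq]; field_simp; ring
    _ = _ := by rw [h]; field_simp

lemma mul_supp_cont (A f : ℝ → ℂ) (hA : ContinuousOn A (Ioi 0)) (hf : Continuous f)
    (hfs : tsupport f ⊆ Ioi (0 : ℝ)) : Continuous fun y => A y * f y := by
  rw [continuous_iff_continuousAt]
  intro x
  by_cases hx : x ∈ tsupport f
  · exact (hA.continuousAt (isOpen_Ioi.mem_nhds (hfs hx))).mul hf.continuousAt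
  · have h0 : f =ᶠ[nhds x] 0 := notMem_tsupport_iff_eventuallyEq.1 hx
    have : (fun y => A y * f y) =ᶠ[nhds x] fun _ => 0 := by
      filter_upwards [h0] with y hy
      simp [hy]
    exact (continuousAt_const (y := (0 : ℂ))).congr this.symm

lemma abstract_green (k : ℂ) (hk : k ≠ 0) (A B A' B' q : ℝ → ℂ)
    (hA : ∀ x, 0 < x → HasDerivAt A (A' x) x) (hB : ∀ x, 0 < x → HasDerivAt B (B' x) x)
    (hA' : ∀ x, 0 < x → HasDerivAt A' (q x * A x) x)
    (hB' : ∀ x, 0 < x → HasDerivAt B' (q x * B x) x)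
    (hq : ContinuousOn q (Ioi 0))
    (hW : ∀ x, 0 < x → A x * B' x - A' x * B x = -k)
    (f : ℝ → ℂ) (hf : Continuous f) (hfc : HasCompactSupport f)
    (hfs : tsupport f ⊆ Ioi (0 : ℝ)) (u : ℝ → ℂ)
    (hu : ∀ x, u x = ∫ y in Ioi (0 : ℝ), (1 / k) * A (min x y) * B (max x y) * f y) :
    ContDiffOn ℝ 2 u (Ioi 0) ∧ ∀ x, 0 < x → deriv (deriv u) x = q x * u x - f x := by
  have cA : Continuous fun y => A y * f y := mul_supp_cont A f
    (fun x hx => (hA x hx).continuousAt.continuousWithinAt) hf hfs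
  have cB : Continuous fun y => B y * f y := mul_supp_cont B f
    (fun x hx => (hB x hx).continuousAt.continuousWithinAt) hf hfs
  have iA : Integrable fun y => A y * f y :=
    cA.integrable_of_hasCompactSupport hfc.mul_left
  have iB : Integrable fun y => B y * f y :=
    cB.integrable_of_hasCompactSupport hfc.mul_left
  let I1 : ℝ → ℂ := fun x => ∫ y in (0 : ℝ)..x, A y * f y
  let I2 : ℝ → ℂ := fun x => (∫ y in Ioi (0 : ℝ), B y * f y) - ∫ y in (0 : ℝ)..x, B y * f y
  have d1 : ∀ x, HasDerivAt I1 (A x * f x) x := fun x =>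
    (cA.integral_hasStrictDerivAt 0 x).hasDerivAt
  have d2 : ∀ x, HasDerivAt I2 (-(B x * f x)) x := fun x => by
    simpa using (cB.integral_hasStrictDerivAt 0 x).hasDerivAt.const_sub _
  have hu1 : ∀ x, 0 < x → u x = (1 / k) * (B x * I1 x + A x * I2 x) := by
    intro x hx
    have e2 : I2 x = ∫ y in Ioi x, B y * f y := by
      have := intervalIntegral.integral_Ioi_sub_Ioi (iB.integrableOn (s := Ioi 0)) hx.le
      simp only [I2]; rw [← this]; ring
    have e1 : I1 x = ∫ y in Ioc 0 x, A y * f y := intervalIntegral.integral_of_le hx.le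
    have g1 : EqOn (fun y => (1 / k) * B x * (A y * f y))
        (fun y => (1 / k) * A (min x y) * B (max x y) * f y) (Ioc 0 x) := fun y hy => by
      simp only [min_eq_right hy.2, max_eq_left hy.2]; ring
    have g2 : EqOn (fun y => (1 / k) * A x * (B y * f y))
        (fun y => (1 / k) * A (min x y) * B (max x y) * f y) (Ioi x) := fun y hy => by
      have hy' : x ≤ y := le_of_lt (mem_Ioi.1 hy)
      simp only [min_eq_left hy', max_eq_right hy']; ring
    rw [hu, ← Ioc_union_Ioi_eq_Ioi hx.le, setIntegral_union (Ioc_disjoint_Ioi le_rfl)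
      measurableSet_Ioi, ← setIntegral_congr_fun measurableSet_Ioc g1,
      ← setIntegral_congr_fun measurableSet_Ioi g2, integral_const_mul, integral_const_mul,
      e1, e2]
    · ring
    · exact IntegrableOn.congr_fun (iA.const_mul _).integrableOn g1 measurableSet_Ioc
    · exact IntegrableOn.congr_fun (iB.const_mul _).integrableOn g2 measurableSet_Ioi
  let v : ℝ → ℂ := fun x => (1 / k) * (B' x * I1 x + A' x * I2 x)
  have du : ∀ x, 0 < x → HasDerivAt u (v x) x := by
    intro x hx
    have h := (((hB x hx).mul (d1 x)).add ((hA x hx).mul (d2 x))).const_mul (1 / k)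
    have h2 : u =ᶠ[nhds x] fun x => (1 / k) * (B x * I1 x + A x * I2 x) := by
      filter_upwards [isOpen_Ioi.mem_nhds hx] with y hy using hu1 y hy
    refine (HasDerivAt.congr_of_eventuallyEq h h2).congr_deriv ?_
    simp only [v]; ring
  have dv : ∀ x, 0 < x → HasDerivAt v (q x * u x - f x) x := by
    intro x hx
    have h := (((hB' x hx).mul (d1 x)).add ((hA' x hx).mul (d2 x))).const_mul (1 / k)
    refine h.congr_deriv ?_
    rw [hu1 x hx]
    field_simp
    linear_combination f x * hW x hx
  have ev : ∀ x, 0 < x → deriv u =ᶠ[nhds x] v := fun x hx => by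
    filter_upwards [isOpen_Ioi.mem_nhds hx] with y hy using (du y hy).deriv
  have ddu : ∀ x, 0 < x → HasDerivAt (deriv u) (q x * u x - f x) x := fun x hx =>
    (dv x hx).congr_of_eventuallyEq (ev x hx)
  refine ⟨?_, fun x hx => (ddu x hx).deriv⟩
  have cu : ContinuousOn u (Ioi 0) := fun x hx => (du x hx).continuousAt.continuousWithinAt
  rw [show (2 : WithTop ℕ∞) = 1 + 1 by norm_num, contDiffOn_succ_iff_deriv_of_isOpen isOpen_Ioi]
  refine ⟨fun x hx => (du x hx).differentiableAt.differentiableWithinAt, by simp, ?_⟩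
  rw [show (1 : WithTop ℕ∞) = 0 + 1 by norm_num, contDiffOn_succ_iff_deriv_of_isOpen isOpen_Ioi]
  refine ⟨fun x hx => (ddu x hx).differentiableAt.differentiableWithinAt, by simp, ?_⟩
  rw [contDiffOn_zero]
  exact ((hq.mul cu).sub hf.continuousOn).congr fun x hx => (ddu x hx).deriv

lemma comp_real_hasDerivAt (k : ℂ) (g : ℂ → ℂ) (g' : ℂ) (x : ℝ)
    (h : HasDerivAt g g' (k * x)) : HasDerivAt (fun x : ℝ => g (k * x)) (k * g') x := by
  have h1 : HasDerivAt (fun z : ℂ => k * z) k (x : ℂ) := by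
    simpa using (hasDerivAt_id (x : ℂ)).const_mul k
  have := (h.comp (x : ℂ) h1).comp_ofReal
  refine this.congr_deriv (by ring)


/-- the Bessel resolvent kernel
`G(x,y) = k⁻¹ 𝓘_m(k min(x,y)) 𝓚_m(k max(x,y))` inverts `-∂² + (m²-1/4)x⁻² + k²` on
continuous compactly supported test functions in `]0,∞[`. -/
theorem bessel_resolvent_kernel_solves (m k : ℂ) (hm : ∀ n : ℤ, m ≠ (n : ℂ))
    (hmre : -1 < m.re) (hk : 0 < k.re)
    (G : ℝ → ℝ → ℂ)
    (hG : ∀ x y : ℝ, G x y =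
      (1 / k) * besselI1d m (k * min x y) * macdonaldK1d m (k * max x y))
    (f : ℝ → ℂ) (hf : Continuous f) (hfc : HasCompactSupport f)
    (hfs : tsupport f ⊆ Ioi (0 : ℝ)) :
    ContDiffOn ℝ 2 (fun x : ℝ => ∫ y in Ioi (0 : ℝ), G x y * f y) (Ioi (0 : ℝ)) ∧
    ∀ x : ℝ, 0 < x →
      -deriv (deriv fun x : ℝ => ∫ y in Ioi (0 : ℝ), G x y * f y) x +
          (m ^ 2 - 1 / 4) / (x : ℂ) ^ 2 * (∫ y in Ioi (0 : ℝ), G x y * f y) +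
          k ^ 2 * (∫ y in Ioi (0 : ℝ), G x y * f y) = f x := by
  have hk0 : k ≠ 0 := by rintro rfl; simp at hk
  have hre : ∀ x : ℝ, 0 < x → 0 < (k * x).re := fun x hx => by
    simpa using mul_pos hk hx
  have hsin : Complex.sin (Real.pi * m) ≠ 0 := by
    rw [Ne, Complex.sin_eq_zero_iff]
    rintro ⟨n, hn⟩
    have hpi : (Real.pi : ℂ) ≠ 0 := by exact_mod_cast Real.pi_ne_zero
    rw [mul_comm] at hn
    exact hm n (mul_right_cancel₀ hpi hn)
  have hscale : ∀ x : ℝ, 0 < x → ∀ a : ℂ, k * (k * (((m ^ 2 - 1 / 4) / (k * x) ^ 2 + 1) * a)) =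
      ((m ^ 2 - 1 / 4) / (x : ℂ) ^ 2 + k ^ 2) * a := fun x hx a => by
    have : (x : ℂ) ≠ 0 := by exact_mod_cast hx.ne'
    field_simp
  have hI : ∀ m : ℂ, ∀ x : ℝ, 0 < x →
      HasDerivAt (fun x : ℝ => besselI1d m (k * x)) (k * besselD m (k * x)) x := fun m x hx =>
    comp_real_hasDerivAt k _ _ x (bessel_hasDerivAt m _ (hre x hx))
  have hD : ∀ m : ℂ, ∀ x : ℝ, 0 < x →
      HasDerivAt (fun x : ℝ => k * besselD m (k * x))
        (k * (k * (((m ^ 2 - 1 / 4) / (k * x) ^ 2 + 1) * besselI1d m (k * x)))) x := fun m x hx =>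
    (comp_real_hasDerivAt k _ _ x (besselD_hasDerivAt m _ (hre x hx))).const_mul k
  have key := abstract_green k hk0 (fun x => besselI1d m (k * x))
    (fun x => macdonaldK1d m (k * x)) (fun x => k * besselD m (k * x))
    (fun x => (k * besselD (-m) (k * x) - k * besselD m (k * x)) / Complex.sin (Real.pi * m))
    (fun x => (m ^ 2 - 1 / 4) / (x : ℂ) ^ 2 + k ^ 2)
    (hI m)
    (fun x hx => ((hI (-m) x hx).sub (hI m x hx)).div_const _)
    (fun x hx => by rw [← hscale x hx]; exact hD m x hx)
    (fun x hx => by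
      refine (((hD (-m) x hx).sub (hD m x hx)).div_const _).congr_deriv ?_
      rw [neg_sq, hscale x hx, hscale x hx]
      unfold macdonaldK1d; ring)
    (by
      refine ContinuousOn.add (ContinuousOn.div continuousOn_const
        (by fun_prop) fun x hx => ?_) continuousOn_const
      have : (x : ℂ) ≠ 0 := by exact_mod_cast (ne_of_gt hx)
      exact pow_ne_zero _ this)
    (fun x hx => by
      have := bessel_wronsk m _ hm (hre x hx)
      unfold macdonaldK1d
      generalize Complex.sin (Real.pi * m) = S at this hsin ⊢
      field_simp
      linear_combination this)
    f hf hfc hfs (fun x : ℝ => ∫ y in Ioi (0 : ℝ), G x y * f y)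
    (fun x => by simp only [hG])
  refine ⟨key.1, fun x hx => ?_⟩
  rw [key.2 x hx]
  ring
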